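/- arXiv:2206.09908 — 3 statements merged into one kernel-verified Lean document; each statement's English description precedes it below -/
import Mathlib

section
/- Infinite-time unbiasedness of the NEIS estimator (Proposition 2.1, infinite-time case). Let U0, U1 : ℝ^d → ℝ be continuous with ∫_{ℝ^d} exp(−U0(x)) dx = 1 and Z1 := ∫_{ℝ^d} exp(−U1(x)) dx < ∞. Let b be an admissible vector field with global flow X and Jacobian factor J, and assume that for every t ∈ ℝ the map x ↦ X t x is continuously differentiable and satisfies det(D_x(X t ·)(x)) = J t x for all x. Assume moreover that there is an open set Ω₀ ⊆ ℝ^d whose complement has Lebesgue measure zero such that, for k = 0, 1, the functions z ↦ ∫_0^∞ F^k_t(z) dt and z ↦ ∫_{−∞}^0 F^k_t(z) dt are finite-valued and continuous on Ω₀. Then Z1 = ∫_{ℝ^d} exp(−U0(x)) · A(x) dx. -/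
/-!
The computation takes place in `ℝ≥0∞`, where Tonelli's theorem needs no integrability. Write
`orbitMass U x = ∫ F_t(x) dt` with `F_t(x) = exp(-U(X_t x)) J_t(x)`. The Jacobian factor is a
cocycle, `J_{t+s}(x) = J_t(X_s x) J_s(x)`, so translation invariance of Lebesgue measure on `ℝ`
gives `orbitMass U (X_s x) * J_s(x) = orbitMass U x` (`orbitMass_flow`).

Put `D = orbitMass U0`. After exchanging the integrals in
`∫ exp(-U0(x)) D(x)⁻¹ ∫ exp(-U1(X_t x)) J_t(x) dt dx`, the change of variables `y = X_t x`, whose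
Jacobian determinant is `J_t(x)`, turns the inner integral over `x` into
`∫ exp(-U1(y)) exp(-U0(X_{-t} y)) D(X_{-t} y)⁻¹ dy`, and the cocycle property gives
`D(X_{-t} y)⁻¹ = J_{-t}(y) D(y)⁻¹`. Exchanging once more, the integral over `t` becomes
`D(y) D(y)⁻¹`, which is `1` almost everywhere because `0 < D < ∞` on `Ω₀`.
-/

open MeasureTheory Filter

noncomputable section

/-- Euclidean state space ℝ^d. -/
abbrev Euc (d : ℕ) := EuclideanSpace ℝ (Fin d)

/-- Divergence of a vector field: trace of the Fréchet derivative. -/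
def vdiv {d : ℕ} (b : Euc d → Euc d) (x : Euc d) : ℝ :=
  LinearMap.trace ℝ (Euc d) (fderiv ℝ b x).toLinearMap

/-- A vector field is admissible if it is C¹ with globally bounded derivative. -/
def Admissible {d : ℕ} (b : Euc d → Euc d) : Prop :=
  ContDiff ℝ 1 b ∧ ∃ C : ℝ, ∀ x, ‖fderiv ℝ b x‖ ≤ C

/-- A global flow of the vector field `b`. -/
def IsGlobalFlow {d : ℕ} (b : Euc d → Euc d) (X : ℝ → Euc d → Euc d) : Prop :=
  (∀ x, X 0 x = x) ∧
  (∀ t s : ℝ, ∀ x, X (t + s) x = X t (X s x)) ∧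
  (∀ x : Euc d, ∀ t : ℝ, HasDerivAt (fun τ => X τ x) (b (X t x)) t)

/-- Jacobian factor of the flow: J t x = exp(∫₀ᵗ div b(X s x) ds). -/
def Jac {d : ℕ} (b : Euc d → Euc d) (X : ℝ → Euc d → Euc d) (t : ℝ) (x : Euc d) : ℝ :=
  Real.exp (∫ s in (0:ℝ)..t, vdiv b (X s x))

open scoped ENNReal

section Flow

variable {d : ℕ} {b : Euc d → Euc d} {X : ℝ → Euc d → Euc d}

/-- The integral over all times `t` of `exp(-U(X_t x)) J_t(x)`, as an extended nonnegative real. -/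
def orbitMass (b : Euc d → Euc d) (X : ℝ → Euc d → Euc d) (U : Euc d → ℝ) (x : Euc d) : ℝ≥0∞ :=
  ∫⁻ t : ℝ, ENNReal.ofReal (Real.exp (-(U (X t x))) * Jac b X t x)

lemma Jac_pos (t : ℝ) (x : Euc d) : 0 < Jac b X t x := Real.exp_pos _

lemma flow_continuous_time (hX : IsGlobalFlow b X) (x : Euc d) : Continuous fun t => X t x :=
  continuous_iff_continuousAt.2 fun t => (hX.2.2 x t).continuousAt

lemma vdiv_continuous (hb : Admissible b) : Continuous (vdiv b) := by
  have h : Continuous (fderiv ℝ b) := hb.1.continuous_fderiv one_ne_zero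
  have hl : Continuous fun L : Euc d →L[ℝ] Euc d => LinearMap.trace ℝ (Euc d) L.toLinearMap :=
    ((LinearMap.trace ℝ (Euc d)).comp (ContinuousLinearMap.coeLM ℝ)).continuous_of_finiteDimensional
  exact hl.comp h

lemma vdiv_flow_continuous (hb : Admissible b) (hX : IsGlobalFlow b X) (x : Euc d) :
    Continuous fun s => vdiv b (X s x) :=
  (vdiv_continuous hb).comp (flow_continuous_time hX x)

lemma Jac_continuous_time (hb : Admissible b) (hX : IsGlobalFlow b X) (x : Euc d) :
    Continuous fun t => Jac b X t x :=
  Real.continuous_exp.comp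
    (intervalIntegral.continuous_primitive
      (fun _ _ => (vdiv_flow_continuous hb hX x).intervalIntegrable _ _) 0)

/-- Continuity in space follows from the identification of `J_t` with the Jacobian determinant. -/
lemma Jac_continuous_space (hdiff : ∀ t : ℝ, ContDiff ℝ 1 (fun x => X t x))
    (hdet : ∀ (t : ℝ) (x : Euc d), (fderiv ℝ (fun y => X t y) x).det = Jac b X t x) (t : ℝ) :
    Continuous fun x => Jac b X t x := by
  simp_rw [← hdet]
  exact ContinuousLinearMap.continuous_det.comp ((hdiff t).continuous_fderiv one_ne_zero)

/-- The cocycle property of the Jacobian factor. -/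
lemma Jac_add (hb : Admissible b) (hX : IsGlobalFlow b X) (t s : ℝ) (x : Euc d) :
    Jac b X (t + s) x = Jac b X t (X s x) * Jac b X s x := by
  have hi := fun u v => (vdiv_flow_continuous hb hX x).intervalIntegrable (μ := volume) u v
  unfold Jac
  rw [← Real.exp_add]
  congr 1
  simp_rw [← hX.2.1]
  rw [intervalIntegral.integral_comp_add_right (fun r => vdiv b (X r x)), zero_add,
    add_comm (∫ r in s..t + s, vdiv b (X r x)),
    intervalIntegral.integral_add_adjacent_intervals (hi _ _) (hi _ _)]

/-- The integrand is continuous in time and continuous in space, hence jointly measurable. -/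
lemma measurable_integrand (hb : Admissible b) (hX : IsGlobalFlow b X)
    (hdiff : ∀ t : ℝ, ContDiff ℝ 1 (fun x => X t x))
    (hdet : ∀ (t : ℝ) (x : Euc d), (fderiv ℝ (fun y => X t y) x).det = Jac b X t x)
    {U : Euc d → ℝ} (hU : Continuous U) :
    Measurable fun p : Euc d × ℝ => Real.exp (-(U (X p.2 p.1))) * Jac b X p.2 p.1 := by
  refine measurable_uncurry_of_continuous_of_measurable
    (u := fun (x : Euc d) (t : ℝ) => Real.exp (-(U (X t x))) * Jac b X t x) ?_ ?_
  · intro t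
    exact (Real.continuous_exp.comp (hU.comp (hdiff t).continuous).neg).mul
      (Jac_continuous_space hdiff hdet t)
  · intro x
    exact ((Real.continuous_exp.comp (hU.comp (flow_continuous_time hX x)).neg).mul
      (Jac_continuous_time hb hX x)).measurable

lemma measurable_orbitMass (hb : Admissible b) (hX : IsGlobalFlow b X)
    (hdiff : ∀ t : ℝ, ContDiff ℝ 1 (fun x => X t x))
    (hdet : ∀ (t : ℝ) (x : Euc d), (fderiv ℝ (fun y => X t y) x).det = Jac b X t x)
    {U : Euc d → ℝ} (hU : Continuous U) : Measurable (orbitMass b X U) :=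
  (measurable_integrand hb hX hdiff hdet hU).ennreal_ofReal.lintegral_prod_right'

lemma orbitMass_flow (hb : Admissible b) (hX : IsGlobalFlow b X) (U : Euc d → ℝ) (s : ℝ)
    (x : Euc d) :
    orbitMass b X U (X s x) * ENNReal.ofReal (Jac b X s x) = orbitMass b X U x := by
  unfold orbitMass
  rw [← lintegral_mul_const' _ _ ENNReal.ofReal_ne_top,
    ← lintegral_add_right_eq_self
      (fun t => ENNReal.ofReal (Real.exp (-(U (X t x))) * Jac b X t x)) s]
  refine lintegral_congr fun t => ?_
  rw [← ENNReal.ofReal_mul (by have := Jac_pos (b := b) (X := X) t (X s x); positivity),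
    hX.2.1, Jac_add hb hX, mul_assoc]

lemma inv_orbitMass_flow (hb : Admissible b) (hX : IsGlobalFlow b X) (U : Euc d → ℝ) (s : ℝ)
    (x : Euc d) :
    (orbitMass b X U (X s x))⁻¹ = ENNReal.ofReal (Jac b X s x) * (orbitMass b X U x)⁻¹ := by
  have hJ : ENNReal.ofReal (Jac b X s x) ≠ 0 := by simpa using Jac_pos s x
  rw [← orbitMass_flow hb hX U s x, ENNReal.mul_inv (Or.inr ENNReal.ofReal_ne_top) (Or.inr hJ),
    mul_left_comm, ENNReal.mul_inv_cancel hJ ENNReal.ofReal_ne_top, mul_one]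

/-- Change of variables `y = X_t x`; the inverse of `X_t` is `X_{-t}`. -/
lemma lintegral_flow (hX : IsGlobalFlow b X)
    (hdiff : ∀ t : ℝ, ContDiff ℝ 1 (fun x => X t x))
    (hdet : ∀ (t : ℝ) (x : Euc d), (fderiv ℝ (fun y => X t y) x).det = Jac b X t x)
    (t : ℝ) (g : Euc d → ℝ≥0∞) :
    ∫⁻ y, g y = ∫⁻ x, ENNReal.ofReal (Jac b X t x) * g (X t x) := by
  have hinv : ∀ s x, X s (X (-s) x) = x := fun s x => by
    rw [← hX.2.1, add_neg_cancel, hX.1]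
  have hinj : Function.Injective (X t) :=
    Function.LeftInverse.injective (g := X (-t)) fun x => by simpa using hinv (-t) x
  have hsurj : Function.Surjective (X t) := fun y => ⟨X (-t) y, hinv t y⟩
  have h := lintegral_image_eq_lintegral_abs_det_fderiv_mul volume MeasurableSet.univ
    (f := X t) (f' := fun x => fderiv ℝ (fun y => X t y) x)
    (fun x _ => (((hdiff t).differentiable one_ne_zero) x).hasFDerivAt.hasFDerivWithinAt)
    hinj.injOn g
  rw [Set.image_univ, hsurj.range_eq] at h
  simpa only [Measure.restrict_univ, hdet, abs_of_pos (Jac_pos _ _)] using h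

/-- The identity in `ℝ≥0∞`, when almost every orbit mass of `U0` lies in `(0, ∞)`. -/
lemma lintegral_estimator (hb : Admissible b) (hX : IsGlobalFlow b X)
    (hdiff : ∀ t : ℝ, ContDiff ℝ 1 (fun x => X t x))
    (hdet : ∀ (t : ℝ) (x : Euc d), (fderiv ℝ (fun y => X t y) x).det = Jac b X t x)
    {U0 U1 : Euc d → ℝ} (hU0 : Continuous U0) (hU1 : Continuous U1)
    (hD : ∀ᵐ x : Euc d, orbitMass b X U0 x ≠ 0 ∧ orbitMass b X U0 x ≠ ∞) :
    ∫⁻ x, ENNReal.ofReal (Real.exp (-(U0 x))) * (orbitMass b X U1 x * (orbitMass b X U0 x)⁻¹) =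
      ∫⁻ y, ENNReal.ofReal (Real.exp (-(U1 y))) := by
  have hm0 := (measurable_integrand hb hX hdiff hdet hU0).ennreal_ofReal
  have hm1 := (measurable_integrand hb hX hdiff hdet hU1).ennreal_ofReal
  have hmD := measurable_orbitMass hb hX hdiff hdet hU0
  have he0 : Measurable fun x => ENNReal.ofReal (Real.exp (-(U0 x))) := by fun_prop
  have he1 : Measurable fun x => ENNReal.ofReal (Real.exp (-(U1 x))) := by fun_prop
  calc
    _ = ∫⁻ x, ∫⁻ t : ℝ, ENNReal.ofReal (Real.exp (-(U0 x))) * (orbitMass b X U0 x)⁻¹ *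
          ENNReal.ofReal (Real.exp (-(U1 (X t x))) * Jac b X t x) := by
      refine lintegral_congr fun x => ?_
      rw [lintegral_const_mul _ (by exact hm1.comp measurable_prodMk_left), mul_assoc,
        mul_comm (orbitMass b X U1 x)]
      rfl
    _ = ∫⁻ t : ℝ, ∫⁻ x, ENNReal.ofReal (Real.exp (-(U0 x))) * (orbitMass b X U0 x)⁻¹ *
          ENNReal.ofReal (Real.exp (-(U1 (X t x))) * Jac b X t x) := by
      refine lintegral_lintegral_swap (Measurable.aemeasurable ?_)
      exact ((he0.mul hmD.inv).comp measurable_fst).mul hm1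
    _ = ∫⁻ t : ℝ, ∫⁻ y, ENNReal.ofReal (Real.exp (-(U1 y))) * (orbitMass b X U0 y)⁻¹ *
          ENNReal.ofReal (Real.exp (-(U0 (X (-t) y))) * Jac b X (-t) y) := by
      refine lintegral_congr fun t => ?_
      refine Eq.trans (lintegral_congr fun x => ?_) (lintegral_flow hX hdiff hdet t _).symm
      have hback : X (-t) (X t x) = x := by rw [← hX.2.1, neg_add_cancel, hX.1]
      have hinv := inv_orbitMass_flow hb hX U0 (-t) (X t x)
      rw [hback] at hinv ⊢
      rw [hinv, ENNReal.ofReal_mul (Real.exp_pos _).le, ENNReal.ofReal_mul (Real.exp_pos _).le]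
      ring
    _ = ∫⁻ y, ∫⁻ t : ℝ, ENNReal.ofReal (Real.exp (-(U1 y))) * (orbitMass b X U0 y)⁻¹ *
          ENNReal.ofReal (Real.exp (-(U0 (X (-t) y))) * Jac b X (-t) y) := by
      refine (lintegral_lintegral_swap (Measurable.aemeasurable ?_)).symm
      exact ((he1.mul hmD.inv).comp measurable_fst).mul
        (hm0.comp (measurable_fst.prodMk measurable_snd.neg))
    _ = _ := by
      refine lintegral_congr_ae ?_
      filter_upwards [hD] with y hy
      rw [lintegral_const_mul _ (by exact hm0.comp (measurable_const.prodMk measurable_neg)),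
        lintegral_neg_eq_self (fun t => ENNReal.ofReal (Real.exp (-(U0 (X t y))) * Jac b X t y)),
        mul_assoc]
      change _ * (_ * orbitMass b X U0 y) = _
      rw [ENNReal.inv_mul_cancel hy.1 hy.2, mul_one]

end Flow

/-- Infinite-time unbiasedness of the NEIS estimator (Proposition 2.1, infinite-time case). -/
theorem stmt_1 {d : ℕ} (hd : 0 < d)
    (U0 U1 : Euc d → ℝ) (hU0c : Continuous U0) (hU1c : Continuous U1)
    (hnorm : (∫ x : Euc d, Real.exp (-(U0 x))) = 1)
    (hZ1 : Integrable (fun x : Euc d => Real.exp (-(U1 x))))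
    (b : Euc d → Euc d) (hb : Admissible b)
    (X : ℝ → Euc d → Euc d) (hX : IsGlobalFlow b X)
    (hdiff : ∀ t : ℝ, ContDiff ℝ 1 (fun x => X t x))
    (hdet : ∀ (t : ℝ) (x : Euc d), (fderiv ℝ (fun y => X t y) x).det = Jac b X t x)
    (Ω₀ : Set (Euc d)) (hΩopen : IsOpen Ω₀) (hΩfull : volume Ω₀ᶜ = 0)
    (hint : ∀ U : Euc d → ℝ, (U = U0 ∨ U = U1) →
      (∀ z ∈ Ω₀, IntegrableOn (fun t : ℝ => Real.exp (-(U (X t z))) * Jac b X t z) (Set.Ioi 0)) ∧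
      (∀ z ∈ Ω₀, IntegrableOn (fun t : ℝ => Real.exp (-(U (X t z))) * Jac b X t z) (Set.Iio 0)) ∧
      ContinuousOn (fun z => ∫ t in Set.Ioi (0:ℝ), Real.exp (-(U (X t z))) * Jac b X t z) Ω₀ ∧
      ContinuousOn (fun z => ∫ t in Set.Iio (0:ℝ), Real.exp (-(U (X t z))) * Jac b X t z) Ω₀) :
    (∫ x : Euc d, Real.exp (-(U1 x))) =
      ∫ x : Euc d, Real.exp (-(U0 x)) *
        ((∫ t : ℝ, Real.exp (-(U1 (X t x))) * Jac b X t x) /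
          (∫ t : ℝ, Real.exp (-(U0 (X t x))) * Jac b X t x)) := by
  have hJ : ∀ (t : ℝ) (x : Euc d), 0 < Jac b X t x := Jac_pos
  have hae : ∀ᵐ x : Euc d, x ∈ Ω₀ := hΩfull
  -- The two half-lines cover `ℝ` up to the null set `{0}`.
  have hfin : ∀ U : Euc d → ℝ, (U = U0 ∨ U = U1) → ∀ z ∈ Ω₀,
      Integrable (fun t : ℝ => Real.exp (-(U (X t z))) * Jac b X t z) := by
    intro U hU z hz
    have h := ((integrableOn_Iic_iff_integrableOn_Iio enorm_ne_top).2 ((hint U hU).2.1 z hz)).union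
      ((hint U hU).1 z hz)
    rwa [Set.Iic_union_Ioi, integrableOn_univ] at h
  have hofReal : ∀ U : Euc d → ℝ, (U = U0 ∨ U = U1) → ∀ z ∈ Ω₀,
      ENNReal.ofReal (∫ t : ℝ, Real.exp (-(U (X t z))) * Jac b X t z) = orbitMass b X U z :=
    fun U hU z hz => ofReal_integral_eq_lintegral_ofReal (hfin U hU z hz)
      (Eventually.of_forall fun t => mul_nonneg (Real.exp_pos _).le (hJ t z).le)
  have hDpos : ∀ z ∈ Ω₀, 0 < ∫ t : ℝ, Real.exp (-(U0 (X t z))) * Jac b X t z := by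
    intro z hz
    rw [integral_pos_iff_support_of_nonneg
      (fun t => mul_nonneg (Real.exp_pos _).le (hJ t z).le) (hfin U0 (Or.inl rfl) z hz)]
    have hs : Function.support (fun t : ℝ => Real.exp (-(U0 (X t z))) * Jac b X t z) = Set.univ :=
      Set.eq_univ_of_forall fun t => (mul_pos (Real.exp_pos _) (hJ t z)).ne'
    rw [hs]
    simp
  have hD : ∀ᵐ x : Euc d, orbitMass b X U0 x ≠ 0 ∧ orbitMass b X U0 x ≠ ∞ := by
    filter_upwards [hae] with z hz
    rw [← hofReal U0 (Or.inl rfl) z hz]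
    exact ⟨by simpa using hDpos z hz, ENNReal.ofReal_ne_top⟩
  have hmI : ∀ U : Euc d → ℝ, Continuous U →
      Measurable fun x => ∫ t : ℝ, Real.exp (-(U (X t x))) * Jac b X t x := fun U hU =>
    (measurable_integrand hb hX hdiff hdet hU).stronglyMeasurable.integral_prod_right'.measurable
  have hI0 : ∀ (U : Euc d → ℝ) (x : Euc d),
      0 ≤ ∫ t : ℝ, Real.exp (-(U (X t x))) * Jac b X t x := fun U x =>
    integral_nonneg fun t => mul_nonneg (Real.exp_pos _).le (hJ t x).le
  rw [integral_eq_lintegral_of_nonneg_ae (Eventually.of_forall fun x => (Real.exp_pos _).le)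
      (by fun_prop),
    integral_eq_lintegral_of_nonneg_ae
      (Eventually.of_forall fun x => mul_nonneg (Real.exp_pos _).le (div_nonneg (hI0 _ _) (hI0 _ _)))
      (Measurable.aestronglyMeasurable ((by fun_prop : Measurable fun x => Real.exp (-(U0 x))).mul
        ((hmI U1 hU1c).div (hmI U0 hU0c)))),
    ← lintegral_estimator hb hX hdiff hdet hU0c hU1c hD]
  congr 1
  refine lintegral_congr_ae ?_
  filter_upwards [hae] with z hz
  rw [ENNReal.ofReal_mul (Real.exp_pos _).le, ENNReal.ofReal_div_of_pos (hDpos z hz),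
    hofReal U0 (Or.inl rfl) z hz, hofReal U1 (Or.inr rfl) z hz, div_eq_mul_inv]
end
end

section
/- Invariance of the NEIS estimator along flowlines (Lemma A.2, equation (2.9)). Let b be an admissible vector field with global flow X and Jacobian factor J, let U0, U1 : ℝ^d → ℝ be continuous, and fix x ∈ ℝ^d such that B(x) := ∫_ℝ F^0_t(x) dt is finite and strictly positive and ∫_ℝ F^1_t(x) dt is finite. Then for every s ∈ ℝ: B(X s x) = B(x) / J s x, and A(X s x) = A(x). -/
/-!
The cocycle identity `J (t + s) x = J t (X s x) * J s x`, which follows from the flow property and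
additivity of the integral of `div b` along the trajectory, shows that
`F t (X s x) = F (t + s) x / J s x` for either potential. Translation invariance of Lebesgue
measure on `ℝ` then turns both `∫ F⁰` and `∫ F¹` at `X s x` into their values at `x` divided by the
same positive number `J s x`, which cancels in the ratio.
-/

open MeasureTheory Filter

noncomputable section

/-- The divergence is continuous along trajectories, hence interval integrable there. -/
lemma continuous_vdiv_flow {d : ℕ} {b : Euc d → Euc d} (hb : Admissible b)
    {X : ℝ → Euc d → Euc d} (hX : IsGlobalFlow b X) (x : Euc d) :
    Continuous fun t => vdiv b (X t x) := by
  have hXc : Continuous fun t => X t x :=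
    continuous_iff_continuousAt.2 fun t => (hX.2.2 x t).continuousAt
  have hD : Continuous fun t => fderiv ℝ b (X t x) :=
    (hb.1.continuous_fderiv one_ne_zero).comp hXc
  -- The trace, as a linear functional on a finite-dimensional space, is continuous.
  let T : (Euc d →L[ℝ] Euc d) →ₗ[ℝ] ℝ :=
    LinearMap.trace ℝ (Euc d) ∘ₗ ContinuousLinearMap.coeLM ℝ
  exact T.continuous_of_finiteDimensional.comp hD

/-- Cocycle identity for the Jacobian factor. -/
lemma jac_add {d : ℕ} {b : Euc d → Euc d} (hb : Admissible b)
    {X : ℝ → Euc d → Euc d} (hX : IsGlobalFlow b X) (x : Euc d) (t s : ℝ) :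
    Jac b X (t + s) x = Jac b X t (X s x) * Jac b X s x := by
  have hc := continuous_vdiv_flow hb hX x
  have hshift : ∫ r in (0:ℝ)..t, vdiv b (X r (X s x)) = ∫ r in s..(t + s), vdiv b (X r x) := by
    simp_rw [← hX.2.1]
    rw [intervalIntegral.integral_comp_add_right (fun r => vdiv b (X r x)) s, zero_add]
  unfold Jac
  rw [hshift, ← Real.exp_add, add_comm (∫ r in s..(t + s), vdiv b (X r x)),
    intervalIntegral.integral_add_adjacent_intervals
      (hc.intervalIntegrable _ _) (hc.intervalIntegrable _ _)]

lemma integral_flow {d : ℕ} {b : Euc d → Euc d} (hb : Admissible b)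
    {X : ℝ → Euc d → Euc d} (hX : IsGlobalFlow b X) (U : Euc d → ℝ) (x : Euc d) (s : ℝ) :
    (∫ t : ℝ, Real.exp (-(U (X t (X s x)))) * Jac b X t (X s x)) =
      (∫ t : ℝ, Real.exp (-(U (X t x))) * Jac b X t x) / Jac b X s x := by
  have hJ : Jac b X s x ≠ 0 := (Real.exp_pos _).ne'
  rw [← integral_add_right_eq_self (fun t : ℝ => Real.exp (-(U (X t x))) * Jac b X t x) s,
    ← integral_div]
  congr 1
  funext t
  rw [jac_add hb hX, hX.2.1, ← mul_assoc, mul_div_cancel_right₀ _ hJ]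

/-- Invariance of the NEIS estimator along flowlines (Lemma A.2, equation (2.9)). -/
theorem stmt_3 {d : ℕ} (hd : 0 < d)
    (b : Euc d → Euc d) (hb : Admissible b)
    (X : ℝ → Euc d → Euc d) (hX : IsGlobalFlow b X)
    (U0 U1 : Euc d → ℝ) (hU0c : Continuous U0) (hU1c : Continuous U1)
    (x : Euc d)
    (hB : Integrable (fun t : ℝ => Real.exp (-(U0 (X t x))) * Jac b X t x))
    (hBpos : 0 < ∫ t : ℝ, Real.exp (-(U0 (X t x))) * Jac b X t x)
    (hF1 : Integrable (fun t : ℝ => Real.exp (-(U1 (X t x))) * Jac b X t x)) :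
    ∀ s : ℝ,
      (∫ t : ℝ, Real.exp (-(U0 (X t (X s x)))) * Jac b X t (X s x)) =
        (∫ t : ℝ, Real.exp (-(U0 (X t x))) * Jac b X t x) / Jac b X s x ∧
      (∫ t : ℝ, Real.exp (-(U1 (X t (X s x)))) * Jac b X t (X s x)) /
          (∫ t : ℝ, Real.exp (-(U0 (X t (X s x)))) * Jac b X t (X s x)) =
        (∫ t : ℝ, Real.exp (-(U1 (X t x))) * Jac b X t x) /
          (∫ t : ℝ, Real.exp (-(U0 (X t x))) * Jac b X t x) := by
  intro s
  have hJ : Jac b X s x ≠ 0 := (Real.exp_pos _).ne'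
  rw [integral_flow hb hX U0, integral_flow hb hX U1]
  exact ⟨rfl, div_div_div_cancel_right₀ hJ _ _⟩
end
end

section
/- Time-rescaling identity (lemma in the proof of Proposition 2.2). Let b be an admissible vector field with global flow X, let α : ℝ^d → ℝ be continuously differentiable with inf_x α(x) > 0, and suppose the vector field α·b (pointwise scalar multiplication) is admissible with global flow Y. Let g : ℝ^d → ℝ be nonnegative and continuous. Then for every x ∈ ℝ^d, with both sides interpreted as Lebesgue integrals of nonnegative functions (values in [0,∞]): ∫_ℝ g(Y t x) · exp(∫_0^t div(α·b)(Y s x) ds) dt = (1/α(x)) · ∫_ℝ g(X t x) · exp(∫_0^t div b(X s x) ds) dt. -/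
/-!
Along a fixed orbit of `Y`, introduce the new clock `τ t = ∫₀ᵗ α (Y s x) ds`. Since `τ' = α (Y t x)`
is bounded below by a positive constant, `τ` is an increasing bijection of `ℝ`. Both `Y t x` and
`X (τ t) x` solve the non-autonomous equation `z' = α (Y t x) • b z` with initial value `x`, so they
coincide (`flow_eq_rescaled_flow`); this uses that `b` is globally Lipschitz.

On the other hand `div (α b) = α div b + Dα · b`, and `Dα (Y t x) (b (Y t x))` is the time derivative
of `log α (Y t x)`. Hence `∫₀ᵗ div (α b) (Y s x) ds` equals
`log α (Y t x) - log α x + ∫₀^{τ t} div b (X s x) ds` (`integral_vdiv_smul`), whose exponential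
is `τ' t / α x` times the Jacobian factor of `X` at time `τ t`. The identity is then the change of
variables `t ↦ τ t`.
-/

open MeasureTheory Filter

noncomputable section

/-- The clock `τ t = ∫₀ᵗ α (Y s x) ds` along the orbit of `x` under `Y`. -/
def clock {d : ℕ} (α : Euc d → ℝ) (Y : ℝ → Euc d → Euc d) (x : Euc d) (t : ℝ) : ℝ :=
  ∫ s in (0:ℝ)..t, α (Y s x)

lemma IsGlobalFlow.continuous_orbit {d : ℕ} {b : Euc d → Euc d} {X : ℝ → Euc d → Euc d}
    (hX : IsGlobalFlow b X) (x : Euc d) : Continuous (fun t => X t x) :=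
  continuous_iff_continuousAt.2 fun t => (hX.2.2 x t).continuousAt

lemma Admissible.continuous_vdiv {d : ℕ} {b : Euc d → Euc d} (hb : Admissible b) :
    Continuous (vdiv b) := by
  have h1 : Continuous (fderiv ℝ b) := hb.1.continuous_fderiv one_ne_zero
  have h2 : Continuous (fun L : Euc d →L[ℝ] Euc d =>
      LinearMap.trace ℝ (Euc d) L.toLinearMap) :=
    LinearMap.continuous_of_finiteDimensional
      ((LinearMap.trace ℝ (Euc d)).comp (ContinuousLinearMap.coeLM ℝ))
  exact h2.comp h1

lemma vdiv_smul {d : ℕ} {b : Euc d → Euc d} {α : Euc d → ℝ} {x : Euc d}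
    (hα : DifferentiableAt ℝ α x) (hb : DifferentiableAt ℝ b x) :
    vdiv (fun y => α y • b y) x = α x * vdiv b x + fderiv ℝ α x (b x) := by
  have h := LinearMap.trace_smulRight (fderiv ℝ α x).toLinearMap (b x)
  unfold vdiv
  rw [fderiv_fun_smul hα hb, ContinuousLinearMap.toLinearMap_add, map_add,
    ContinuousLinearMap.toLinearMap_smul, map_smul, smul_eq_mul]
  congr 1

lemma hasDerivAt_clock {d : ℕ} {α : Euc d → ℝ} {Y : ℝ → Euc d → Euc d} {x : Euc d}
    (hα : Continuous α) (hY : Continuous fun t => Y t x) (t : ℝ) :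
    HasDerivAt (clock α Y x) (α (Y t x)) t :=
  (hα.comp hY).integral_hasStrictDerivAt 0 t |>.hasDerivAt

/-- A differentiable function on `ℝ` with derivative bounded below by a positive constant is onto. -/
lemma surjective_of_le_deriv {f f' : ℝ → ℝ} {c : ℝ} (hc : 0 < c)
    (hf : ∀ t, HasDerivAt f (f' t) t) (hf' : ∀ t, c ≤ f' t) : Function.Surjective f := by
  have hd : Differentiable ℝ f := fun t => (hf t).differentiableAt
  have hm := mul_sub_le_image_sub_of_le_deriv hd (fun t => (hf t).deriv ▸ hf' t)
  refine hd.continuous.surjective ?_ ?_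
  · refine Filter.tendsto_atTop_mono' atTop ?_
      (tendsto_atTop_add_const_right _ (f 0) (tendsto_id.const_mul_atTop hc))
    filter_upwards [eventually_ge_atTop 0] with t ht
    have := hm ht
    simp only [id]
    linarith
  · refine Filter.tendsto_atBot_mono' atBot ?_
      (tendsto_atBot_add_const_right _ (f 0) (tendsto_id.const_mul_atBot hc))
    filter_upwards [eventually_le_atBot 0] with t ht
    have := hm ht
    simp only [id]
    linarith

/-- The flow of `α b` is the flow of `b` run with the clock `τ t = ∫₀ᵗ α (Y s x) ds`. -/
lemma flow_eq_rescaled_flow {d : ℕ} {b : Euc d → Euc d} (hb : Admissible b)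
    {X : ℝ → Euc d → Euc d} (hX : IsGlobalFlow b X) {α : Euc d → ℝ} (hα : Continuous α)
    {Y : ℝ → Euc d → Euc d} (hY : IsGlobalFlow (fun y => α y • b y) Y) (x : Euc d) (t : ℝ) :
    Y t x = X (clock α Y x t) x := by
  have hYc := hY.continuous_orbit x
  obtain ⟨C, hC⟩ := hb.2
  have hbL : LipschitzWith C.toNNReal b :=
    lipschitzWith_of_nnnorm_fderiv_le (hb.1.differentiable one_ne_zero)
      fun z => NNReal.coe_le_coe.1 ((hC z).trans (Real.le_coe_toNNReal C))
  -- The Lipschitz constant of `α (Y s x) • b` is uniform only for `s` in a bounded interval.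
  obtain ⟨M, hM⟩ := (isCompact_Icc (a := -(|t| + 1)) (b := |t| + 1)).exists_bound_of_continuousOn
    (hα.comp hYc).continuousOn
  have hlip : ∀ s ∈ Set.Ioo (-(|t| + 1)) (|t| + 1),
      LipschitzOnWith (M.toNNReal * C.toNNReal) (fun z => α (Y s x) • b z) Set.univ := by
    intro s hs
    have h1 : ‖α (Y s x)‖₊ ≤ M.toNNReal :=
      NNReal.coe_le_coe.1 ((hM s (Set.Ioo_subset_Icc_self hs)).trans (Real.le_coe_toNNReal M))
    exact (((lipschitzWith_smul (α (Y s x))).comp hbL).weaken (by gcongr)).lipschitzOnWith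
  refine ODE_solution_unique_of_mem_Ioo (v := fun s z => α (Y s x) • b z) (t₀ := 0)
    (f := fun s => Y s x) (g := fun s => X (clock α Y x s) x) hlip
    ⟨by linarith [abs_nonneg t], by positivity⟩
    (fun s _ => ⟨hY.2.2 x s, trivial⟩)
    (fun s _ => ⟨(hX.2.2 x _).scomp s (hasDerivAt_clock hα hYc s), trivial⟩)
    ?_ ⟨by linarith [neg_abs_le t], by linarith [le_abs_self t]⟩
  simp [clock, hX.1, hY.1]

lemma integral_vdiv_smul {d : ℕ} {b : Euc d → Euc d} (hb : Admissible b)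
    {X : ℝ → Euc d → Euc d} (hX : IsGlobalFlow b X) {α : Euc d → ℝ} (hα : ContDiff ℝ 1 α)
    (hpos : ∀ x, 0 < α x) (hab : Admissible (fun y => α y • b y))
    {Y : ℝ → Euc d → Euc d} (hY : IsGlobalFlow (fun y => α y • b y) Y) (x : Euc d) (t : ℝ) :
    ∫ s in (0:ℝ)..t, vdiv (fun y => α y • b y) (Y s x) =
      Real.log (α (Y t x)) - Real.log (α x) +
        ∫ s in (0:ℝ)..clock α Y x t, vdiv b (X s x) := by
  have hYc := hY.continuous_orbit x
  have hL : ∀ t, HasDerivAt (fun t => ∫ s in (0:ℝ)..t, vdiv (fun y => α y • b y) (Y s x))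
      (vdiv (fun y => α y • b y) (Y t x)) t := fun t =>
    ((hab.continuous_vdiv.comp hYc).integral_hasStrictDerivAt 0 t).hasDerivAt
  have hR : ∀ t, HasDerivAt (fun t => Real.log (α (Y t x)) - Real.log (α x) +
      ∫ s in (0:ℝ)..clock α Y x t, vdiv b (X s x)) (vdiv (fun y => α y • b y) (Y t x)) t := by
    intro t
    have hαd : DifferentiableAt ℝ α (Y t x) := hα.differentiable one_ne_zero _
    have h1 := ((hαd.hasFDerivAt.comp_hasDerivAt t (hY.2.2 x t)).log
      (hpos (Y t x)).ne').sub_const (Real.log (α x))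
    have h2 := HasDerivAt.comp t
      ((hb.continuous_vdiv.comp (hX.continuous_orbit x)).integral_hasStrictDerivAt 0
        (clock α Y x t)).hasDerivAt (hasDerivAt_clock hα.continuous hYc t)
    refine (h1.add h2).congr_deriv ?_
    have h0 := (hpos (Y t x)).ne'
    rw [vdiv_smul hαd (hb.1.differentiable one_ne_zero _)]
    simp only [Function.comp, ← flow_eq_rescaled_flow hb hX hα.continuous hY, map_smul,
      smul_eq_mul]
    field_simp
    ring
  have hz : ∀ t, HasDerivAt (fun t => (∫ s in (0:ℝ)..t, vdiv (fun y => α y • b y) (Y s x)) -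
      (Real.log (α (Y t x)) - Real.log (α x) +
        ∫ s in (0:ℝ)..clock α Y x t, vdiv b (X s x))) 0 t := fun t =>
    ((hL t).sub (hR t)).congr_deriv (sub_self _)
  have := is_const_of_deriv_eq_zero (fun t => (hz t).differentiableAt) (fun t => (hz t).deriv) t 0
  simp only [clock, intervalIntegral.integral_same, hY.1, sub_self, add_zero] at this
  exact sub_eq_zero.1 this

/-- Time-rescaling identity (lemma in the proof of Proposition 2.2). -/
theorem stmt_4 {d : ℕ} (hd : 0 < d)
    (b : Euc d → Euc d) (hb : Admissible b)
    (X : ℝ → Euc d → Euc d) (hX : IsGlobalFlow b X)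
    (α : Euc d → ℝ) (hα : ContDiff ℝ 1 α)
    (hαpos : ∃ c : ℝ, 0 < c ∧ ∀ x, c ≤ α x)
    (hab : Admissible (fun y => α y • b y))
    (Y : ℝ → Euc d → Euc d) (hY : IsGlobalFlow (fun y => α y • b y) Y)
    (g : Euc d → ℝ) (hgc : Continuous g) (hgn : ∀ x, 0 ≤ g x) :
    ∀ x : Euc d,
      (∫⁻ t : ℝ, ENNReal.ofReal
          (g (Y t x) * Real.exp (∫ s in (0:ℝ)..t, vdiv (fun y => α y • b y) (Y s x)))) =
        ENNReal.ofReal (1 / α x) *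
          ∫⁻ t : ℝ, ENNReal.ofReal
            (g (X t x) * Real.exp (∫ s in (0:ℝ)..t, vdiv b (X s x))) := by
  obtain ⟨c, hc, hcα⟩ := hαpos
  have hpos : ∀ x, 0 < α x := fun x => hc.trans_le (hcα x)
  intro x
  have hτ : ∀ t, HasDerivAt (clock α Y x) (α (Y t x)) t :=
    hasDerivAt_clock hα.continuous (hY.continuous_orbit x)
  have hmono : StrictMono (clock α Y x) :=
    strictMono_of_deriv_pos fun t => (hτ t).deriv ▸ hpos _
  have hsurj : Function.Surjective (clock α Y x) :=
    surjective_of_le_deriv hc hτ fun t => hcα _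
  have hcv := lintegral_image_eq_lintegral_deriv_mul_of_monotoneOn MeasurableSet.univ
    (fun t _ => (hτ t).hasDerivWithinAt) (hmono.monotone.monotoneOn _)
    (fun t => ENNReal.ofReal (g (X t x) * Real.exp (∫ s in (0:ℝ)..t, vdiv b (X s x))))
  rw [Set.image_univ, hsurj.range_eq, Measure.restrict_univ] at hcv
  rw [hcv, ← lintegral_const_mul' _ _ ENNReal.ofReal_ne_top]
  refine lintegral_congr fun t => ?_
  have h0 : 0 ≤ 1 / α x := (one_div_pos.2 (hpos x)).le
  rw [← ENNReal.ofReal_mul (hpos _).le, ← ENNReal.ofReal_mul h0,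
    integral_vdiv_smul hb hX hα hpos hab hY, ← flow_eq_rescaled_flow hb hX hα.continuous hY,
    Real.exp_add, Real.exp_sub, Real.exp_log (hpos _), Real.exp_log (hpos _)]
  congr 1
  ring
end
end
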